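/- Let H and U be real Hilbert spaces, B : U → H a bounded linear operator with adjoint B* : H → U, μ ∈ (0,1), and β > 0 such that ‖B*y‖² ≥ β‖y‖² for all y ∈ H. Define G : H → H by G(y) = ‖B*y‖^{−μ} B B* y if B*y ≠ 0 and G(y) = 0 if B*y = 0. Let A₀ : H → H satisfy ⟨x, A₀x⟩ ≤ 0 for all x ∈ H and let f : H → ℝ satisfy f(x) ≤ 0 for all x ∈ H. Then for all y ∈ H, ⟨y, A₀y + f(y)·y − G(y)⟩ ≤ −β^{1−μ/2}‖y‖^{2−μ}. -/

import Mathlib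

open scoped RealInnerProductSpace Classical

lemma rpow_half_mul_rpow_le_rpow {β a b s : ℝ} (hβ : 0 ≤ β) (ha : 0 ≤ a)
    (hb : 0 ≤ b) (hs : 0 ≤ s) (h : β * a ^ 2 ≤ b ^ 2) : β ^ (s / 2) * a ^ s ≤ b ^ s := by
  have sq_rpow_half {t : ℝ} (ht : 0 ≤ t) : (t ^ 2) ^ (s / 2) = t ^ s := by
    rw [← Real.rpow_two, ← Real.rpow_mul ht, mul_div_cancel₀ s two_ne_zero]
  calc β ^ (s / 2) * a ^ s
      = (β * a ^ 2) ^ (s / 2) := by rw [Real.mul_rpow hβ (sq_nonneg a), sq_rpow_half ha]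
    _ ≤ (b ^ 2) ^ (s / 2) := by gcongr
    _ = b ^ s := sq_rpow_half hb

section PowerFeedback

variable {H U : Type*} [AddCommGroup H] [Module ℝ H] [SeminormedAddCommGroup U]
  {B : U → H} {C : H → U} {μ : ℝ}

/-- The feedback `y ↦ ‖C y‖^(-μ) B (C y)` with control operator `B` and observation operator `C`;
taking `C = B*` gives the nonlinearity `G` of the closed-loop system. -/
noncomputable def powerFeedback (B : U → H) (C : H → U) (μ : ℝ) (y : H) : H :=
  ‖C y‖ ^ (-μ) • B (C y)

lemma powerFeedback_eq_ite (hB : B 0 = 0) (y : H) :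
    powerFeedback B C μ y = if C y ≠ 0 then ‖C y‖ ^ (-μ) • B (C y) else 0 := by
  split_ifs with hy
  · rfl
  · rw [powerFeedback, not_not.mp hy, hB, smul_zero]

end PowerFeedback

section Dissipation

variable {H U : Type*} [SeminormedAddCommGroup H] [InnerProductSpace ℝ H]
  [SeminormedAddCommGroup U] [InnerProductSpace ℝ U] {B : U → H} {C : H → U} {μ β : ℝ}

lemma inner_powerFeedback (hCB : LinearMap.IsAdjointPair (innerₗ H) (innerₗ U) C B) (hμ : μ ≠ 2)
    (y : H) : ⟪y, powerFeedback B C μ y⟫ = ‖C y‖ ^ (2 - μ) := by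
  have inner_control : ⟪y, B (C y)⟫ = ‖C y‖ ^ 2 :=
    (hCB y (C y)).symm.trans (real_inner_self_eq_norm_sq (C y))
  have exponent_ne_zero : -μ + 2 ≠ 0 := by
    rw [neg_add_eq_sub]
    exact sub_ne_zero.mpr hμ.symm
  calc ⟪y, powerFeedback B C μ y⟫
      = ‖C y‖ ^ (-μ) * ‖C y‖ ^ (2 : ℝ) := by
        rw [powerFeedback, real_inner_smul_right, inner_control, Real.rpow_two]
    _ = ‖C y‖ ^ (2 - μ) := by
        rw [← Real.rpow_add' (norm_nonneg _) exponent_ne_zero, neg_add_eq_sub]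

lemma rpow_mul_norm_rpow_le_inner_powerFeedback
    (hCB : LinearMap.IsAdjointPair (innerₗ H) (innerₗ U) C B) (hμ : μ < 2) (hβ : 0 ≤ β) {y : H}
    (hC : β * ‖y‖ ^ 2 ≤ ‖C y‖ ^ 2) :
    β ^ (1 - μ / 2) * ‖y‖ ^ (2 - μ) ≤ ⟪y, powerFeedback B C μ y⟫ := by
  have half_exponent : (2 - μ) / 2 = 1 - μ / 2 := by ring
  rw [inner_powerFeedback hCB hμ.ne, ← half_exponent]
  exact rpow_half_mul_rpow_le_rpow hβ (norm_nonneg y) (norm_nonneg (C y)) (sub_pos.mpr hμ).le hC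

lemma inner_self_add_smul_nonpos {y v : H} {c : ℝ} (hv : ⟪y, v⟫ ≤ 0) (hc : c ≤ 0) :
    ⟪y, v + c • y⟫ ≤ 0 := by
  rw [inner_add_right, real_inner_smul_right]
  exact add_nonpos hv (mul_nonpos_of_nonpos_of_nonneg hc real_inner_self_nonneg)

theorem closed_loop_dissipation_inequality_general
    (hCB : LinearMap.IsAdjointPair (innerₗ H) (innerₗ U) C B) (hμ : μ < 2) (hβ : 0 ≤ β)
    {A₀ : H → H} {f : H → ℝ} {y : H} (hC : β * ‖y‖ ^ 2 ≤ ‖C y‖ ^ 2)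
    (hA₀ : ⟪y, A₀ y⟫ ≤ 0) (hf : f y ≤ 0) :
    ⟪y, A₀ y + f y • y - powerFeedback B C μ y⟫ ≤ -(β ^ (1 - μ / 2)) * ‖y‖ ^ (2 - μ) := by
  have drift_nonpos : ⟪y, A₀ y + f y • y⟫ ≤ 0 := inner_self_add_smul_nonpos hA₀ hf
  have damping := rpow_mul_norm_rpow_le_inner_powerFeedback hCB hμ hβ hC
  rw [inner_sub_right]
  linarith

end Dissipation

/-- Pointwise Lyapunov dissipation inequality for the closed-loop operator:
`⟪y, A₀ y + f(y) y − G(y)⟫ ≤ −β^{1−μ/2} ‖y‖^{2−μ}`. -/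
theorem closed_loop_dissipation_inequality
    {H U : Type*} [NormedAddCommGroup H] [InnerProductSpace ℝ H] [CompleteSpace H]
    [NormedAddCommGroup U] [InnerProductSpace ℝ U] [CompleteSpace U]
    (B : U →L[ℝ] H) (μ β : ℝ) (hμ : μ ∈ Set.Ioo (0 : ℝ) 1) (hβ : 0 < β)
    (hB : ∀ y : H, β * ‖y‖ ^ 2 ≤ ‖(ContinuousLinearMap.adjoint B) y‖ ^ 2)
    (G : H → H)
    (hG : ∀ y : H, G y =
      if (ContinuousLinearMap.adjoint B) y ≠ 0 then
        (‖(ContinuousLinearMap.adjoint B) y‖ ^ (-μ)) • B ((ContinuousLinearMap.adjoint B) y)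
      else 0)
    (A₀ : H → H) (hA₀ : ∀ x : H, ⟪x, A₀ x⟫ ≤ 0)
    (f : H → ℝ) (hf : ∀ x : H, f x ≤ 0) :
    ∀ y : H, ⟪y, A₀ y + f y • y - G y⟫ ≤ -(β ^ (1 - μ / 2)) * ‖y‖ ^ (2 - μ) := by
  intro y
  rw [hG y, ← powerFeedback_eq_ite (map_zero B)]
  exact closed_loop_dissipation_inequality_general
    (fun x u ↦ ContinuousLinearMap.adjoint_inner_left B u x) (hμ.2.trans one_lt_two) hβ.le (hB y)
    (hA₀ y) (hf y)
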